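/- Let α ∈ (1,2) and let f, g ∈ L^α(S, μ) be nonzero and satisfy Assumptions (A1) and (A2) with constants ε₁, ε₂. Let β ∈ (0, α/2) and define G(u) := |u|^{−β} for |u| < 1 and G(u) := 1 for |u| ≥ 1. Then there is a finite constant C, depending only on α, β, ε₁, ε₂, ‖f‖_α and ‖g‖_α, such that ∫_ℝ ∫_ℝ |D₁(u,v)| G(u) du dv ≤ C and ∫_ℝ ∫_ℝ |D₂(u,v)| G(u)G(v) du dv ≤ C. (Paper's Lemma 3.6.) -/

import Mathlib

open MeasureTheory Real Set Filter
open scoped ENNReal Topology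

noncomputable def nrm (α : ℝ) {S : Type*} [MeasurableSpace S] (μ : Measure S) (f : S → ℝ) : ℝ :=
  (∫ s, |f s| ^ α ∂μ) ^ (1 / α)

noncomputable def dep2 (α : ℝ) {S : Type*} [MeasurableSpace S] (μ : Measure S) (f g : S → ℝ) : ℝ :=
  ∫ s, |f s * g s| ^ (α / 2) ∂μ

noncomputable def dep1s (α : ℝ) {S : Type*} [MeasurableSpace S] (μ : Measure S) (f g : S → ℝ) : ℝ :=
  ∫ s, |f s| ^ (α - 1) * |g s| ∂μ

noncomputable def dep1 (α : ℝ) {S : Type*} [MeasurableSpace S] (μ : Measure S) (f g : S → ℝ) : ℝ :=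
  dep1s α μ f g + dep1s α μ g f

/-- `f ∈ L^α(S, μ)`. -/
def MemLalpha (α : ℝ) {S : Type*} [MeasurableSpace S] (μ : Measure S) (f : S → ℝ) : Prop :=
  AEStronglyMeasurable f μ ∧ Integrable (fun s => |f s| ^ α) μ

/-- Assumption (A1) with constant ε₁. -/
def A1 (α ε₁ : ℝ) {S : Type*} [MeasurableSpace S] (μ : Measure S) (f g : S → ℝ) : Prop :=
  nrm α μ f ^ (α / 2) * nrm α μ g ^ (α / 2) - dep2 α μ f g
    ≥ ε₁ * (nrm α μ f ^ (α / 2) * nrm α μ g ^ (α / 2))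

/-- Assumption (A2) with constant ε₂. -/
def A2 (α ε₂ : ℝ) {S : Type*} [MeasurableSpace S] (μ : Measure S) (f g : S → ℝ) : Prop :=
  ∀ u v : ℝ, nrm α μ (fun s => u * f s + v * g s) ^ α
    ≥ ε₂ * (|u| ^ α * nrm α μ f ^ α + |v| ^ α * nrm α μ g ^ α)

noncomputable def Ufun (α : ℝ) {S : Type*} [MeasurableSpace S] (μ : Measure S)
    (f g : S → ℝ) (u v : ℝ) : ℝ :=
  Real.exp (-(nrm α μ (fun s => u * f s + v * g s) ^ α)) -
    Real.exp (-(nrm α μ (fun s => u * f s) ^ α) - nrm α μ (fun s => v * g s) ^ α)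

/-- signed power `a^⟨p⟩ = sign(a)|a|^p`. -/
noncomputable def spow (a p : ℝ) : ℝ := Real.sign a * |a| ^ p

noncomputable def D1 (α : ℝ) {S : Type*} [MeasurableSpace S] (μ : Measure S)
    (f g : S → ℝ) (u v : ℝ) : ℝ :=
  -α * (∫ s, spow (u * f s + v * g s) (α - 1) * f s ∂μ) *
      Real.exp (-(nrm α μ (fun s => u * f s + v * g s) ^ α)) +
    α * (∫ s, spow (u * f s) (α - 1) * f s ∂μ) *
      Real.exp (-(nrm α μ (fun s => u * f s) ^ α) - nrm α μ (fun s => v * g s) ^ α)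

noncomputable def D2 (α : ℝ) {S : Type*} [MeasurableSpace S] (μ : Measure S)
    (f g : S → ℝ) (u v : ℝ) : ℝ :=
  -(α * (α - 1)) * (∫ s, (if f s = 0 ∨ g s = 0 then (0:ℝ) else
        |u * f s + v * g s| ^ (α - 2) * (f s * g s)) ∂μ) *
      Real.exp (-(nrm α μ (fun s => u * f s + v * g s) ^ α)) +
    α ^ 2 * (∫ s, spow (u * f s + v * g s) (α - 1) * f s ∂μ) *
      (∫ s, spow (u * f s + v * g s) (α - 1) * g s ∂μ) *
      Real.exp (-(nrm α μ (fun s => u * f s + v * g s) ^ α)) -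
    α ^ 2 * (∫ s, spow (u * f s) (α - 1) * f s ∂μ) *
      (∫ s, spow (v * g s) (α - 1) * g s ∂μ) *
      Real.exp (-(nrm α μ (fun s => u * f s) ^ α) - nrm α μ (fun s => v * g s) ^ α)

/-- `(ξ, η)` is jointly SαS with spectral pair `(f, g)`. -/
def JointSAS (α : ℝ) {S : Type*} [MeasurableSpace S] (μ : Measure S) (f g : S → ℝ)
    {Ω : Type*} [MeasurableSpace Ω] (P : Measure Ω) (ξ η : Ω → ℝ) : Prop :=
  ∀ u v : ℝ, (∫ ω, Complex.exp (Complex.I * ((u * ξ ω + v * η ω : ℝ) : ℂ)) ∂P)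
    = Complex.exp (-((nrm α μ (fun s => u * f s + v * g s) ^ α : ℝ) : ℂ))

/-!
By (A2) both characteristic functions are at most `exp (-c |u| ^ α) * exp (-c |v| ^ α)`, while the
integrals of signed powers grow polynomially in `(u, v)`. Hence `|D₁| G(u)`, and the part of
`|D₂| G(u) G(v)` free of `|u f + v g| ^ (α - 2)`, are dominated by singular powers of `u` and `v`
of exponent above `-1`, integrated against a finite measure with bounded density.

The term with `|u f(s) + v g(s)| ^ (α - 2)` is first integrated in `(u, v)`, at fixed `s`. With
`w = u f / g`, part of the singularities at `v = -w` and `v = 0` is traded, through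
`|w| ≤ |v + w| + |v|`, for a power of `|w|`, until the exponents in `u` and in `v` are both above
`-1`. This leaves a homogeneous function of `(f(s), g(s))` of degree `α`, which is integrable.
-/

section Kernel

open scoped NNReal

lemma rpow_mul_rpow_le_rpow_add_rpow {x y i j : ℝ} (hx : 0 ≤ x) (hy : 0 ≤ y) (hi : 0 ≤ i)
    (hj : 0 ≤ j) : x ^ i * y ^ j ≤ x ^ (i + j) + y ^ (i + j) := by
  wlog h : x ≤ y generalizing x y i j
  · rw [mul_comm, add_comm i, add_comm (x ^ _)]
    exact this hy hx hj hi (le_of_not_ge h)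
  calc x ^ i * y ^ j ≤ y ^ i * y ^ j := by gcongr
    _ = y ^ (i + j) := (rpow_add_of_nonneg hy hi hj).symm
    _ ≤ x ^ (i + j) + y ^ (i + j) := le_add_of_nonneg_left (by positivity)

lemma rpow_neg_mul_rpow_neg_le_add {x y i j : ℝ} (hx : 0 ≤ x) (hy : 0 ≤ y) (hi : 0 ≤ i)
    (hj : 0 ≤ j) : x ^ (-i) * y ^ (-j) ≤ x ^ (-(i + j)) + y ^ (-(i + j)) := by
  simpa only [rpow_neg_eq_inv_rpow] using
    rpow_mul_rpow_le_rpow_add_rpow (inv_nonneg.2 hx) (inv_nonneg.2 hy) hi hj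

lemma rpow_neg_mul_rpow_neg_le_of_le_add {x y z p q s : ℝ} (hx : 0 < x) (hy : 0 < y) (hz : 0 < z)
    (hzxy : z ≤ x + y) (hs0 : 0 ≤ s) (hs1 : s ≤ 1) (hsp : s ≤ p) (hsq : s ≤ q) :
    x ^ (-p) * y ^ (-q) ≤
      2 * z ^ (-s) * (x ^ (-(p + q - s)) + y ^ (-(p + q - s))) := by
  set T := x ^ (-(p + q - s)) + y ^ (-(p + q - s)) with hT
  have hz_rpow : z ^ s ≤ x ^ s + y ^ s :=
    (rpow_le_rpow hz.le hzxy hs0).trans (rpow_add_le_add_rpow hx.le hy.le hs0 hs1)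
  have hx_part : x ^ s * (x ^ (-p) * y ^ (-q)) ≤ T := by
    rw [← mul_assoc, ← rpow_add hx, hT, show s + -p = -(p - s) by ring,
      show p + q - s = p - s + q by ring]
    exact rpow_neg_mul_rpow_neg_le_add hx.le hy.le (by linarith) (by linarith)
  have hy_part : y ^ s * (x ^ (-p) * y ^ (-q)) ≤ T := by
    rw [mul_left_comm, ← rpow_add hy, hT, show s + -q = -(q - s) by ring,
      show p + q - s = p + (q - s) by ring]
    exact rpow_neg_mul_rpow_neg_le_add hx.le hy.le (by linarith) (by linarith)
  calc x ^ (-p) * y ^ (-q) = z ^ (-s) * (z ^ s * (x ^ (-p) * y ^ (-q))) := by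
        rw [← mul_assoc, ← rpow_add hz, neg_add_cancel, rpow_zero, one_mul]
    _ ≤ z ^ (-s) * ((x ^ s + y ^ s) * (x ^ (-p) * y ^ (-q))) := by gcongr
    _ ≤ z ^ (-s) * (2 * T) := by
        rw [add_mul, two_mul]
        gcongr
    _ = 2 * z ^ (-s) * T := by ring

lemma exists_lintegral_norm_add_rpow_neg_le {E : Type*} [NormedAddCommGroup E] [NormedSpace ℝ E]
    [FiniteDimensional ℝ E] [MeasurableSpace E] [BorelSpace E] {μ ν : Measure E}
    [μ.IsAddHaarMeasure] [IsFiniteMeasure ν] {L : ℝ≥0} (hν : ν ≤ L • μ) {t : ℝ} (ht0 : 0 ≤ t)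
    (ht : t < Module.finrank ℝ E) :
    ∃ C : ℝ≥0, ∀ w : E, ∫⁻ x, ENNReal.ofReal (‖x + w‖ ^ (-t)) ∂ν ≤ C := by
  set k : E → ℝ≥0∞ := (Metric.ball 0 1).indicator fun x => ENNReal.ofReal (‖x‖ ^ (-t)) with hk
  have hk_ne_top : ∫⁻ x, k x ∂μ ≠ ⊤ := by
    have hfin : 1 ≤ Module.finrank ℝ E := by exact_mod_cast ht0.trans_lt ht
    rw [hk, lintegral_indicator measurableSet_ball]
    refine (integrableOn_ball_of_norm_le_rpow (C := 1) hfin ht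
      (Eventually.of_forall fun x => ?_)
      (measurable_norm.pow_const _).aestronglyMeasurable).lintegral_lt_top.ne
    rw [one_mul, norm_of_nonneg (by positivity)]
  have le_one_add : ∀ y : E, ENNReal.ofReal (‖y‖ ^ (-t)) ≤ 1 + k y := by
    intro y
    by_cases hy : y ∈ Metric.ball (0 : E) 1
    · rw [hk, indicator_of_mem hy]
      exact le_add_self
    · have hy1 : 1 ≤ ‖y‖ := by simpa using hy
      exact le_add_right (ENNReal.ofReal_le_one.2
        (rpow_le_one_of_one_le_of_nonpos hy1 (neg_nonpos.2 ht0)))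
  refine ⟨(ν univ + L * ∫⁻ x, k x ∂μ).toNNReal, fun w => ?_⟩
  rw [ENNReal.coe_toNNReal (by finiteness)]
  calc ∫⁻ x, ENNReal.ofReal (‖x + w‖ ^ (-t)) ∂ν
      ≤ ∫⁻ x, 1 + k (x + w) ∂ν := lintegral_mono fun x => le_one_add (x + w)
    _ = ν univ + ∫⁻ x, k (x + w) ∂ν := by
        rw [lintegral_add_left measurable_const, lintegral_one]
    _ ≤ ν univ + ∫⁻ x, k (x + w) ∂(L • μ) := by gcongr
    _ = ν univ + L * ∫⁻ x, k x ∂μ := by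
        rw [lintegral_smul_measure, lintegral_add_right_eq_self k w]; rfl

/-- The kernel whose `(u, v)`-integral controls the term of `D2` carrying the singularity
`|u f + v g| ^ (α - 2)`, at a point where `f = a` and `g = b`; here `p = 2 - α`, and the exponent
`q` accounts for the two weights `G`. -/
noncomputable def singularKernel (p q a b u v : ℝ) : ℝ :=
  |u * a + v * b| ^ (-p) * |a * b| * (|u| ^ (-q) * |v| ^ (-q))

lemma singularKernel_le_of_ne_zero {p q s a b u v : ℝ} (ha : a ≠ 0) (hb : b ≠ 0) (hu : u ≠ 0)
    (hv : v ≠ 0) (hw : v + u * a / b ≠ 0) (hs0 : 0 ≤ s) (hs1 : s ≤ 1) (hsp : s ≤ p)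
    (hsq : s ≤ q) :
    singularKernel p q a b u v ≤
      2 * (|a| ^ (1 - s) * |b| ^ (1 + s - p)) * |u| ^ (-(s + q)) *
        (|v + u * a / b| ^ (-(p + q - s)) + |v| ^ (-(p + q - s))) := by
  have factor : |u * a + v * b| = |b| * |v + u * a / b| := by
    rw [← abs_mul]; congr 1; field_simp; ring
  have triangle : |u * a / b| ≤ |v + u * a / b| + |v| := by
    simpa using abs_sub (v + u * a / b) v
  have A := abs_pos.2 ha
  have B := abs_pos.2 hb
  have U := abs_pos.2 hu
  have singularities_le := rpow_neg_mul_rpow_neg_le_of_le_add (abs_pos.2 hw) (abs_pos.2 hv)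
    (abs_pos.2 (div_ne_zero (mul_ne_zero hu ha) hb)) triangle hs0 hs1 hsp hsq
  have ratio : |u * a / b| ^ (-s) = |u| ^ (-s) * |a| ^ (-s) * |b| ^ s := by
    rw [abs_div, abs_mul, div_rpow (by positivity) B.le, mul_rpow U.le A.le, rpow_neg B.le,
      div_inv_eq_mul]
  calc singularKernel p q a b u v
      = |b| ^ (-p) * (|a| * |b|) * |u| ^ (-q) * (|v + u * a / b| ^ (-p) * |v| ^ (-q)) := by
        rw [singularKernel, factor, mul_rpow B.le (abs_nonneg _), abs_mul a b]; ring
    _ ≤ |b| ^ (-p) * (|a| * |b|) * |u| ^ (-q) *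
          (2 * |u * a / b| ^ (-s) *
            (|v + u * a / b| ^ (-(p + q - s)) + |v| ^ (-(p + q - s)))) := by gcongr
    _ = 2 * ((|a| * |a| ^ (-s)) * (|b| * |b| ^ s * |b| ^ (-p))) * (|u| ^ (-s) * |u| ^ (-q)) *
          (|v + u * a / b| ^ (-(p + q - s)) + |v| ^ (-(p + q - s))) := by rw [ratio]; ring
    _ = _ := by
        rw [sub_eq_add_neg 1 s, sub_eq_add_neg (1 + s) p, neg_add s q, rpow_add A, rpow_add B,
          rpow_add B, rpow_add U, rpow_one, rpow_one]

lemma singularKernel_le {p q s a b u v : ℝ} (hb : b ≠ 0) (hp : 0 < p) (hq : 0 < q)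
    (hs0 : 0 ≤ s) (hs1 : s ≤ 1) (hsp : s ≤ p) (hsq : s ≤ q) :
    singularKernel p q a b u v ≤
      2 * (|a| ^ (1 - s) * |b| ^ (1 + s - p)) * |u| ^ (-(s + q)) *
        (|v + u * a / b| ^ (-(p + q - s)) + |v| ^ (-(p + q - s))) := by
  rcases eq_or_ne a 0 with rfl | ha
  · simp only [singularKernel, zero_mul, abs_zero, mul_zero]; positivity
  rcases eq_or_ne u 0 with rfl | hu
  · simp only [singularKernel, abs_zero, zero_rpow (neg_ne_zero.2 hq.ne'), zero_mul,
      mul_zero]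
    positivity
  rcases eq_or_ne v 0 with rfl | hv
  · simp only [singularKernel, abs_zero, zero_rpow (neg_ne_zero.2 hq.ne'), mul_zero]; positivity
  rcases eq_or_ne (v + u * a / b) 0 with hw | hw
  · have : u * a + v * b = 0 := by rw [← zero_mul b, ← hw]; field_simp; ring
    simp only [singularKernel, this, abs_zero, zero_rpow (neg_ne_zero.2 hp.ne'),
      zero_mul]
    positivity
  exact singularKernel_le_of_ne_zero ha hb hu hv hw hs0 hs1 hsp hsq

lemma lintegral_singularKernel_le {ν : Measure ℝ} {C : ℝ≥0} {p q s a b : ℝ} (hb : b ≠ 0)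
    (hp : 0 < p) (hq : 0 < q) (hs0 : 0 ≤ s) (hs1 : s ≤ 1) (hsp : s ≤ p) (hsq : s ≤ q)
    (hC : ∀ w, ∫⁻ v, ENNReal.ofReal (|v + w| ^ (-(p + q - s))) ∂ν ≤ C) (u : ℝ) :
    ∫⁻ v, ENNReal.ofReal (singularKernel p q a b u v) ∂ν ≤
      ENNReal.ofReal (2 * (|a| ^ (1 - s) * |b| ^ (1 + s - p))) *
        ENNReal.ofReal (|u| ^ (-(s + q))) * (C + C) := by
  set Q := |a| ^ (1 - s) * |b| ^ (1 + s - p)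
  calc ∫⁻ v, ENNReal.ofReal (singularKernel p q a b u v) ∂ν
      ≤ ∫⁻ v, ENNReal.ofReal (2 * Q) * ENNReal.ofReal (|u| ^ (-(s + q))) *
          (ENNReal.ofReal (|v + u * a / b| ^ (-(p + q - s))) +
            ENNReal.ofReal (|v| ^ (-(p + q - s)))) ∂ν := by
        refine lintegral_mono fun v => ?_
        rw [← ENNReal.ofReal_add (by positivity) (by positivity),
          ← ENNReal.ofReal_mul (by positivity), ← ENNReal.ofReal_mul (by positivity)]
        exact ENNReal.ofReal_le_ofReal (singularKernel_le hb hp hq hs0 hs1 hsp hsq)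
    _ ≤ ENNReal.ofReal (2 * Q) * ENNReal.ofReal (|u| ^ (-(s + q))) * (C + C) := by
        rw [lintegral_const_mul' _ _ (by finiteness), lintegral_add_left (by fun_prop)]
        gcongr
        · exact hC _
        · simpa using hC 0

lemma exists_lintegral_lintegral_singularKernel_le {ν : Measure ℝ} [IsFiniteMeasure ν] {L : ℝ≥0}
    (hν : ν ≤ L • volume) {p q : ℝ} (hp0 : 0 < p) (hp1 : p < 1) (hq : 0 < q)
    (hpq : p + 2 * q < 2) :
    ∃ C : ℝ≥0, ∀ a b : ℝ, ∫⁻ u, ∫⁻ v, ENNReal.ofReal (singularKernel p q a b u v) ∂ν ∂ν ≤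
      C * ENNReal.ofReal (|a| ^ (2 - p) + |b| ^ (2 - p)) := by
  -- `s` is chosen to make both exponents `s + q` (in `u`) and `p + q - s` (in `v`) less than `1`;
  -- this is possible because `p + 2 * q < 2`.
  obtain ⟨s, hs_lower, hs_upper⟩ : ∃ s, max 0 (p + q - 1) < s ∧ s < min p (min q (1 - q)) := by
    apply exists_between
    simp only [max_lt_iff, lt_min_iff]
    refine ⟨⟨?_, ?_⟩, ⟨?_, ?_⟩, ?_, ?_⟩ <;> linarith
  obtain ⟨hs0, hspq⟩ := max_lt_iff.1 hs_lower
  obtain ⟨hsp, hsq, hsq'⟩ := by simpa only [lt_min_iff] using hs_upper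
  obtain ⟨C₁, hC₁⟩ := exists_lintegral_norm_add_rpow_neg_le hν (t := s + q) (by linarith)
    (by rw [Module.finrank_self, Nat.cast_one]; linarith)
  obtain ⟨C₂, hC₂⟩ := exists_lintegral_norm_add_rpow_neg_le hν (t := p + q - s) (by linarith)
    (by rw [Module.finrank_self, Nat.cast_one]; linarith)
  simp only [norm_eq_abs] at hC₁ hC₂
  refine ⟨2 * C₁ * (C₂ + C₂), fun a b => ?_⟩
  rcases eq_or_ne b 0 with rfl | hb
  · simp [singularKernel]
  set Q := |a| ^ (1 - s) * |b| ^ (1 + s - p)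
  have hQ : Q ≤ |a| ^ (2 - p) + |b| ^ (2 - p) := by
    have := rpow_mul_rpow_le_rpow_add_rpow (abs_nonneg a) (abs_nonneg b)
      (i := 1 - s) (j := 1 + s - p) (by linarith) (by linarith)
    rwa [show 1 - s + (1 + s - p) = 2 - p by ring] at this
  calc ∫⁻ u, ∫⁻ v, ENNReal.ofReal (singularKernel p q a b u v) ∂ν ∂ν
      ≤ ∫⁻ u, ENNReal.ofReal (2 * Q) * ENNReal.ofReal (|u| ^ (-(s + q))) * (C₂ + C₂) ∂ν :=
        lintegral_mono fun u => lintegral_singularKernel_le hb hp0 hq hs0.le (by linarith) hsp.le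
          hsq.le hC₂ u
    _ ≤ ENNReal.ofReal (2 * Q) * C₁ * (C₂ + C₂) := by
        rw [lintegral_mul_const' _ _ (by finiteness), lintegral_const_mul' _ _ (by finiteness)]
        gcongr
        simpa using hC₁ 0
    _ = (2 * C₁ * (C₂ + C₂) : ℝ≥0) * ENNReal.ofReal Q := by
        rw [ENNReal.ofReal_mul zero_le_two, ENNReal.ofReal_ofNat]; push_cast; ring
    _ ≤ _ := by gcongr

lemma aemeasurable_singularKernel {X : Type*} [MeasurableSpace X] {m : Measure X} (p q : ℝ)
    {a b u v : X → ℝ} (ha : AEMeasurable a m) (hb : AEMeasurable b m) (hu : AEMeasurable u m)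
    (hv : AEMeasurable v m) :
    AEMeasurable (fun x => singularKernel p q (a x) (b x) (u x) (v x)) m :=
  ((((hu.mul ha).add (hv.mul hb)).abs.pow_const _).mul (ha.mul hb).abs).mul
    ((hu.abs.pow_const _).mul (hv.abs.pow_const _))

lemma lintegral_lintegral_lintegral_singularKernel_le {ν : Measure ℝ} [SFinite ν] {p q : ℝ}
    {C : ℝ≥0} (hC : ∀ a b : ℝ, ∫⁻ u, ∫⁻ v, ENNReal.ofReal (singularKernel p q a b u v) ∂ν ∂ν ≤
      C * ENNReal.ofReal (|a| ^ (2 - p) + |b| ^ (2 - p)))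
    {S : Type*} [MeasurableSpace S] {μ : Measure S} [SFinite μ] {f g : S → ℝ}
    (hf : AEMeasurable f μ) (hg : AEMeasurable g μ)
    (hfp : Integrable (fun s => |f s| ^ (2 - p)) μ)
    (hgp : Integrable (fun s => |g s| ^ (2 - p)) μ) :
    ∫⁻ u, ∫⁻ v, ∫⁻ s, ENNReal.ofReal (singularKernel p q (f s) (g s) u v) ∂μ ∂ν ∂ν ≤
      C * ENNReal.ofReal ((∫ s, |f s| ^ (2 - p) ∂μ) + ∫ s, |g s| ^ (2 - p) ∂μ) := by
  set F : ℝ → ℝ → S → ℝ≥0∞ := fun u v s => ENNReal.ofReal (singularKernel p q (f s) (g s) u v)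
  have hF : AEMeasurable (fun x : (ℝ × S) × ℝ => F x.1.1 x.2 x.1.2) ((ν.prod μ).prod ν) :=
    (aemeasurable_singularKernel p q hf.comp_snd.comp_fst hg.comp_snd.comp_fst
      (by fun_prop) (by fun_prop)).ennreal_ofReal
  have hF_inner : ∀ u, AEMeasurable (fun x : ℝ × S => F u x.1 x.2) (ν.prod μ) := fun u =>
    (aemeasurable_singularKernel p q hf.comp_snd hg.comp_snd
      aemeasurable_const (by fun_prop)).ennreal_ofReal
  have hfgp : Integrable (fun s => |f s| ^ (2 - p) + |g s| ^ (2 - p)) μ := hfp.add hgp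
  calc ∫⁻ u, ∫⁻ v, ∫⁻ s, F u v s ∂μ ∂ν ∂ν
      = ∫⁻ u, ∫⁻ s, ∫⁻ v, F u v s ∂ν ∂μ ∂ν :=
        lintegral_congr fun u => lintegral_lintegral_swap (hF_inner u)
    _ = ∫⁻ s, ∫⁻ u, ∫⁻ v, F u v s ∂ν ∂ν ∂μ := lintegral_lintegral_swap hF.lintegral_prod_right'
    _ ≤ ∫⁻ s, C * ENNReal.ofReal (|f s| ^ (2 - p) + |g s| ^ (2 - p)) ∂μ :=
        lintegral_mono fun s => hC (f s) (g s)
    _ = _ := by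
        rw [lintegral_const_mul' _ _ ENNReal.coe_ne_top, ← integral_add hfp hgp,
          ofReal_integral_eq_lintegral_ofReal hfgp
            (Eventually.of_forall fun s => by dsimp only [Pi.zero_apply]; positivity)]

end Kernel

section StableWeight

open scoped NNReal

lemma one_add_pow_mul_exp_neg_le {α c x : ℝ} (hα : 1 ≤ α) (hc : 0 < c) (hx : 0 ≤ x) (n : ℕ) :
    (1 + x) ^ n * exp (-(c * x ^ α)) ≤ n.factorial * exp (2 * c) / c ^ n := by
  have le_one_add_rpow : x ≤ 1 + x ^ α := by
    rcases le_total x 1 with h | h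
    · exact h.trans (le_add_of_nonneg_right (by positivity))
    · exact (self_le_rpow_of_one_le h hα).trans (le_add_of_nonneg_left zero_le_one)
  have pow_le_exp : (c * (1 + x)) ^ n ≤ n.factorial * exp (2 * c + c * x ^ α) := by
    rw [← div_le_iff₀' (by positivity)]
    refine (pow_div_factorial_le_exp _ (by positivity) n).trans (exp_le_exp.2 ?_)
    nlinarith
  rw [le_div_iff₀ (by positivity)]
  calc (1 + x) ^ n * exp (-(c * x ^ α)) * c ^ n
      = (c * (1 + x)) ^ n * exp (-(c * x ^ α)) := by rw [mul_pow]; ring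
    _ ≤ n.factorial * exp (2 * c + c * x ^ α) * exp (-(c * x ^ α)) := by gcongr
    _ = n.factorial * exp (2 * c) := by rw [mul_assoc, ← exp_add, add_neg_cancel_right]

/-- The density that absorbs, in each variable, the exponential decay of the characteristic
functions and all polynomial factors; the power `3` is what the bound for `D2` produces. -/
noncomputable def stableWeight (α c x : ℝ) : ℝ := (1 + |x|) ^ 3 * exp (-(c * |x| ^ α))

/-- The finite measure on `ℝ` with density `stableWeight α c`, against which the singular powers
are integrated. -/
noncomputable def stableWeightMeasure (α c : ℝ) : Measure ℝ :=
  volume.withDensity fun x => ENNReal.ofReal (stableWeight α c x)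

lemma measurable_stableWeight (α c : ℝ) : Measurable (stableWeight α c) := by
  unfold stableWeight
  fun_prop

lemma stableWeight_nonneg (α c x : ℝ) : 0 ≤ stableWeight α c x := by
  unfold stableWeight
  positivity

lemma exists_stableWeight_le {α c : ℝ} (hα : 1 ≤ α) (hc : 0 < c) :
    ∃ L : ℝ≥0, ∀ x, stableWeight α c x ≤ L * (1 + x ^ 2)⁻¹ := by
  set L : ℝ := (5).factorial * exp (2 * c) / c ^ 5
  refine ⟨⟨L, by positivity⟩, fun x => ?_⟩
  rw [← div_eq_mul_inv, le_div_iff₀ (by positivity)]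
  calc stableWeight α c x * (1 + x ^ 2) ≤ stableWeight α c x * (1 + |x|) ^ 2 := by
        gcongr
        · exact stableWeight_nonneg α c x
        · nlinarith [sq_abs x, abs_nonneg x]
    _ = (1 + |x|) ^ 5 * exp (-(c * |x| ^ α)) := by unfold stableWeight; ring
    _ ≤ L := one_add_pow_mul_exp_neg_le hα hc (abs_nonneg x) 5

lemma isFiniteMeasure_stableWeightMeasure {α c : ℝ} (hα : 1 ≤ α) (hc : 0 < c) :
    IsFiniteMeasure (stableWeightMeasure α c) := by
  obtain ⟨L, hL⟩ := exists_stableWeight_le hα hc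
  refine isFiniteMeasure_withDensity_ofReal (Integrable.mono'
    (integrable_inv_one_add_sq.const_mul (L : ℝ))
    (measurable_stableWeight α c).aestronglyMeasurable (Eventually.of_forall fun x => ?_)).2
  rw [norm_of_nonneg (stableWeight_nonneg α c x)]
  exact hL x

lemma exists_stableWeightMeasure_le {α c : ℝ} (hα : 1 ≤ α) (hc : 0 < c) :
    ∃ L : ℝ≥0, stableWeightMeasure α c ≤ L • volume := by
  obtain ⟨L, hL⟩ := exists_stableWeight_le hα hc
  refine ⟨L, (withDensity_mono (g := fun _ => (L : ℝ≥0∞))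
    (Eventually.of_forall fun x => ?_)).trans_eq (withDensity_const _)⟩
  refine (ENNReal.ofReal_le_ofReal ((hL x).trans ?_)).trans_eq (ENNReal.ofReal_coe_nnreal (p := L))
  exact mul_le_of_le_one_right L.2 (inv_le_one_of_one_le₀ (by nlinarith [sq_nonneg x]))

lemma lintegral_lintegral_le_lintegral_lintegral_withDensity {X : Type*} [MeasurableSpace X]
    {m : Measure X} {ρ : X → ℝ≥0∞} (hρ : Measurable ρ) (hρ_top : ∀ x, ρ x ≠ ∞)
    {Φ Ψ : X → X → ℝ≥0∞} (h : ∀ᵐ u ∂m, ∀ᵐ v ∂m, Φ u v ≤ ρ u * (ρ v * Ψ u v)) :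
    ∫⁻ u, ∫⁻ v, Φ u v ∂m ∂m ≤
      ∫⁻ u, ∫⁻ v, Ψ u v ∂(m.withDensity ρ) ∂(m.withDensity ρ) := by
  have withDensity_eq : ∀ F : X → ℝ≥0∞,
      ∫⁻ x, F x ∂(m.withDensity ρ) = ∫⁻ x, ρ x * F x ∂m := fun F =>
    lintegral_withDensity_eq_lintegral_mul_non_measurable _ hρ
      (Eventually.of_forall fun x => (hρ_top x).lt_top) F
  calc ∫⁻ u, ∫⁻ v, Φ u v ∂m ∂m ≤ ∫⁻ u, ∫⁻ v, ρ u * (ρ v * Ψ u v) ∂m ∂m :=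
        lintegral_mono_ae (h.mono fun u hu => lintegral_mono_ae hu)
    _ = _ := by
        simp_rw [withDensity_eq, lintegral_const_mul' _ _ (hρ_top _)]

end StableWeight

section CharFun

/-- The weight `G` of the theorem: `|u| ^ (-β)` near the origin and `1` away from it. -/
noncomputable def originWeight (β u : ℝ) : ℝ := if |u| < 1 then |u| ^ (-β) else 1

lemma originWeight_nonneg (β u : ℝ) : 0 ≤ originWeight β u := by
  unfold originWeight
  split_ifs <;> positivity

lemma originWeight_le {β q u : ℝ} (hβq : β ≤ q) (hq : q ≤ 1) (hu : u ≠ 0) :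
    originWeight β u ≤ |u| ^ (-q) * (1 + |u|) := by
  have hu' : 0 < |u| := abs_pos.2 hu
  unfold originWeight
  split_ifs with h
  · calc |u| ^ (-β) ≤ |u| ^ (-q) := rpow_le_rpow_of_exponent_ge hu' h.le (neg_le_neg hβq)
      _ ≤ |u| ^ (-q) * (1 + |u|) := le_mul_of_one_le_right (by positivity) (by linarith)
  · calc (1 : ℝ) ≤ |u| ^ (1 - q) := one_le_rpow (not_lt.1 h) (by linarith)
      _ = |u| ^ (-q) * |u| := by rw [sub_eq_neg_add, rpow_add_one hu'.ne']
      _ ≤ |u| ^ (-q) * (1 + |u|) := by gcongr; linarith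

lemma abs_spow_le (a p : ℝ) : |spow a p| ≤ |a| ^ p := by
  have abs_sign_le_one : |Real.sign a| ≤ 1 := by
    rcases sign_apply_eq a with h | h | h <;> simp [h]
  rw [spow, abs_mul, abs_of_nonneg (rpow_nonneg (abs_nonneg a) p)]
  exact mul_le_of_le_one_left (by positivity) abs_sign_le_one

variable {S : Type*} [MeasurableSpace S] {μ : Measure S} {f g : S → ℝ} {α : ℝ}

lemma nrm_nonneg (f : S → ℝ) : 0 ≤ nrm α μ f :=
  rpow_nonneg (integral_nonneg fun s => by positivity) _

lemma nrm_rpow (hα : α ≠ 0) (f : S → ℝ) : nrm α μ f ^ α = ∫ s, |f s| ^ α ∂μ := by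
  rw [nrm, one_div, rpow_inv_rpow (integral_nonneg fun s => by positivity) hα]

lemma nrm_const_mul_rpow (hα : α ≠ 0) (u : ℝ) (f : S → ℝ) :
    nrm α μ (fun s => u * f s) ^ α = |u| ^ α * nrm α μ f ^ α := by
  simp_rw [nrm_rpow hα, abs_mul, mul_rpow (abs_nonneg _) (abs_nonneg _), integral_const_mul]

lemma add_rpow_le_two_rpow_mul {x y : ℝ} (hx : 0 ≤ x) (hy : 0 ≤ y) (hα : 1 ≤ α) :
    (x + y) ^ α ≤ 2 ^ (α - 1) * (x ^ α + y ^ α) := by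
  lift x to NNReal using hx
  lift y to NNReal using hy
  exact_mod_cast NNReal.rpow_add_le_mul_rpow_add_rpow x y hα

lemma integrable_abs_add_abs_rpow (hα : 1 ≤ α) (hf : MemLalpha α μ f) (hg : MemLalpha α μ g) :
    Integrable (fun s => (|f s| + |g s|) ^ α) μ := by
  refine ((hf.2.add hg.2).const_mul (2 ^ (α - 1))).mono'
    ((hf.1.aemeasurable.abs.add hg.1.aemeasurable.abs).pow_const α).aestronglyMeasurable
    (Eventually.of_forall fun s => ?_)
  rw [norm_of_nonneg (by positivity)]
  exact add_rpow_le_two_rpow_mul (abs_nonneg _) (abs_nonneg _) hα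

/-- The upper bound that convexity of `x ^ α` gives for `∫ (|f| + |g|) ^ α` in terms of
`nf = ‖f‖_α` and `ng = ‖g‖_α`. -/
noncomputable def envelopeBound (α nf ng : ℝ) : ℝ := 2 ^ (α - 1) * (nf ^ α + ng ^ α)

lemma envelopeBound_nonneg {nf ng : ℝ} (hnf : 0 ≤ nf) (hng : 0 ≤ ng) :
    0 ≤ envelopeBound α nf ng := by
  unfold envelopeBound
  positivity

lemma envelopeBound_comm (α nf ng : ℝ) : envelopeBound α nf ng = envelopeBound α ng nf := by
  rw [envelopeBound, envelopeBound, add_comm (nf ^ α)]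

lemma integral_abs_add_abs_rpow_le (hα : 1 ≤ α) (hf : MemLalpha α μ f) (hg : MemLalpha α μ g) :
    ∫ s, (|f s| + |g s|) ^ α ∂μ ≤ envelopeBound α (nrm α μ f) (nrm α μ g) := by
  have hα0 : α ≠ 0 := by positivity
  calc ∫ s, (|f s| + |g s|) ^ α ∂μ ≤ ∫ s, 2 ^ (α - 1) * (|f s| ^ α + |g s| ^ α) ∂μ :=
        integral_mono (integrable_abs_add_abs_rpow hα hf hg) ((hf.2.add hg.2).const_mul _)
          fun s => add_rpow_le_two_rpow_mul (abs_nonneg _) (abs_nonneg _) hα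
    _ = envelopeBound α (nrm α μ f) (nrm α μ g) := by
        rw [envelopeBound, nrm_rpow hα0, nrm_rpow hα0, integral_const_mul,
          integral_add hf.2 hg.2]

lemma abs_integral_spow_mul_le (hα : 1 ≤ α) {M : ℝ} (hM : 0 ≤ M) {e h k : S → ℝ}
    (he : Integrable (fun s => e s ^ α) μ) (hh : ∀ s, |h s| ≤ M * e s) (hk : ∀ s, |k s| ≤ e s) :
    |∫ s, spow (h s) (α - 1) * k s ∂μ| ≤ M ^ (α - 1) * ∫ s, e s ^ α ∂μ := by
  rw [← integral_const_mul, ← norm_eq_abs]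
  refine norm_integral_le_of_norm_le (he.const_mul _) (Eventually.of_forall fun s => ?_)
  have he0 : 0 ≤ e s := (abs_nonneg _).trans (hk s)
  have hα' : 0 ≤ α - 1 := sub_nonneg.2 hα
  calc ‖spow (h s) (α - 1) * k s‖ = |spow (h s) (α - 1)| * |k s| := abs_mul _ _
    _ ≤ (M * e s) ^ (α - 1) * e s := by
        gcongr
        · exact (abs_spow_le _ _).trans (rpow_le_rpow (abs_nonneg _) (hh s) hα')
        · exact hk s
    _ = M ^ (α - 1) * e s ^ α := by
        nth_rewrite 2 [← rpow_one (e s)]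
        rw [mul_rpow hM he0, mul_assoc, ← rpow_add_of_nonneg he0 hα' zero_le_one,
          sub_add_cancel]

lemma abs_integral_spow_mul_le_envelopeBound (hα1 : 1 ≤ α) (hα2 : α ≤ 2)
    (hf : MemLalpha α μ f) (hg : MemLalpha α μ g) {u v : ℝ} {h k : S → ℝ}
    (hh : ∀ s, |h s| ≤ (|u| + |v|) * (|f s| + |g s|)) (hk : ∀ s, |k s| ≤ |f s| + |g s|) :
    |∫ s, spow (h s) (α - 1) * k s ∂μ| ≤
      (1 + |u|) * (1 + |v|) * envelopeBound α (nrm α μ f) (nrm α μ g) := by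
  have polynomial_growth : (|u| + |v|) ^ (α - 1) ≤ (1 + |u|) * (1 + |v|) :=
    calc (|u| + |v|) ^ (α - 1) ≤ (1 + (|u| + |v|)) ^ (α - 1) :=
          rpow_le_rpow (by positivity) (by linarith) (by linarith)
      _ ≤ 1 + (|u| + |v|) := rpow_le_self_of_one_le
          (le_add_of_nonneg_right (by positivity)) (by linarith)
      _ ≤ (1 + |u|) * (1 + |v|) := by nlinarith [mul_nonneg (abs_nonneg u) (abs_nonneg v)]
  refine (abs_integral_spow_mul_le hα1 (by positivity)
    (integrable_abs_add_abs_rpow hα1 hf hg) hh hk).trans ?_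
  gcongr
  exact integral_abs_add_abs_rpow_le hα1 hf hg

lemma abs_mul_add_mul_le (u v a b : ℝ) : |u * a + v * b| ≤ (|u| + |v|) * (|a| + |b|) := by
  have := abs_add_le (u * a) (v * b)
  rw [abs_mul, abs_mul] at this
  nlinarith [abs_nonneg u, abs_nonneg v, abs_nonneg a, abs_nonneg b]

/-- The joint characteristic function of a pair with spectral representation `(f, g)` plus the
product of its marginal characteristic functions; their difference is `Ufun`. -/
noncomputable def charFunSum (α : ℝ) {S : Type*} [MeasurableSpace S] (μ : Measure S)
    (f g : S → ℝ) (u v : ℝ) : ℝ :=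
  exp (-(nrm α μ (fun s => u * f s + v * g s) ^ α)) +
    exp (-(nrm α μ (fun s => u * f s) ^ α) - nrm α μ (fun s => v * g s) ^ α)

/-- The rate `c` for which assumption (A2) bounds the characteristic functions at `(u, v)` by
`exp (-c |u| ^ α) * exp (-c |v| ^ α)`, where `nf = ‖f‖_α` and `ng = ‖g‖_α`. -/
noncomputable def decayRate (α ε₂ nf ng : ℝ) : ℝ := min 1 ε₂ * min (nf ^ α) (ng ^ α)

lemma decayRate_pos {ε₂ nf ng : ℝ} (hε₂ : 0 < ε₂) (hnf : 0 < nf) (hng : 0 < ng) :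
    0 < decayRate α ε₂ nf ng := by
  unfold decayRate
  positivity

lemma charFunSum_le {ε₂ : ℝ} (hα : α ≠ 0) (hε₂ : 0 ≤ ε₂) (hA2 : A2 α ε₂ μ f g) (u v : ℝ) :
    charFunSum α μ f g u v ≤
      2 * (exp (-(decayRate α ε₂ (nrm α μ f) (nrm α μ g) * |u| ^ α)) *
        exp (-(decayRate α ε₂ (nrm α μ f) (nrm α μ g) * |v| ^ α))) := by
  set c := decayRate α ε₂ (nrm α μ f) (nrm α μ g) with hc
  have hF : 0 ≤ nrm α μ f ^ α := rpow_nonneg (nrm_nonneg f) α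
  have hG : 0 ≤ nrm α μ g ^ α := rpow_nonneg (nrm_nonneg g) α
  have decay_le : ∀ ε, min 1 ε₂ ≤ ε → c * |u| ^ α + c * |v| ^ α ≤
      ε * (|u| ^ α * nrm α μ f ^ α + |v| ^ α * nrm α μ g ^ α) := by
    intro ε hε
    have hε0 : 0 ≤ ε := (le_min zero_le_one hε₂).trans hε
    calc c * |u| ^ α + c * |v| ^ α
        ≤ ε * nrm α μ f ^ α * |u| ^ α + ε * nrm α μ g ^ α * |v| ^ α := by
          rw [hc, decayRate]
          gcongr
          · exact min_le_left _ _
          · exact min_le_right _ _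
      _ = _ := by ring
  rw [← exp_add, two_mul, charFunSum, nrm_const_mul_rpow hα, nrm_const_mul_rpow hα]
  refine add_le_add (exp_le_exp.2 ?_) (exp_le_exp.2 ?_)
  · linarith [decay_le ε₂ (min_le_right _ _), hA2 u v]
  · linarith [decay_le 1 (min_le_left _ _)]

lemma abs_integral_spow_joint_le (hα1 : 1 ≤ α) (hα2 : α ≤ 2) (hf : MemLalpha α μ f)
    (hg : MemLalpha α μ g) (u v : ℝ) {k : S → ℝ} (hk : ∀ s, |k s| ≤ |f s| + |g s|) :
    |∫ s, spow (u * f s + v * g s) (α - 1) * k s ∂μ| ≤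
      (1 + |u|) * (1 + |v|) * envelopeBound α (nrm α μ f) (nrm α μ g) :=
  abs_integral_spow_mul_le_envelopeBound hα1 hα2 hf hg
    (fun s => abs_mul_add_mul_le u v (f s) (g s)) hk

lemma abs_integral_spow_left_le (hα1 : 1 ≤ α) (hα2 : α ≤ 2) (hf : MemLalpha α μ f)
    (hg : MemLalpha α μ g) (u v : ℝ) :
    |∫ s, spow (u * f s) (α - 1) * f s ∂μ| ≤
      (1 + |u|) * (1 + |v|) * envelopeBound α (nrm α μ f) (nrm α μ g) := by
  refine abs_integral_spow_mul_le_envelopeBound hα1 hα2 hf hg (fun s => ?_)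
    fun s => le_add_of_nonneg_right (abs_nonneg _)
  rw [abs_mul]
  gcongr <;> exact le_add_of_nonneg_right (abs_nonneg _)

lemma abs_integral_spow_right_le (hα1 : 1 ≤ α) (hα2 : α ≤ 2) (hf : MemLalpha α μ f)
    (hg : MemLalpha α μ g) (u v : ℝ) :
    |∫ s, spow (v * g s) (α - 1) * g s ∂μ| ≤
      (1 + |u|) * (1 + |v|) * envelopeBound α (nrm α μ f) (nrm α μ g) := by
  rw [mul_comm (1 + |u|), envelopeBound_comm]
  exact abs_integral_spow_left_le hα1 hα2 hg hf v u

lemma abs_D1_le (hα1 : 1 ≤ α) (hα2 : α ≤ 2) (hf : MemLalpha α μ f) (hg : MemLalpha α μ g)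
    (u v : ℝ) :
    |D1 α μ f g u v| ≤
      α * ((1 + |u|) * (1 + |v|) * envelopeBound α (nrm α μ f) (nrm α μ g)) *
        charFunSum α μ f g u v := by
  set B := (1 + |u|) * (1 + |v|) * envelopeBound α (nrm α μ f) (nrm α μ g)
  have joint_le : |∫ s, spow (u * f s + v * g s) (α - 1) * f s ∂μ| ≤ B :=
    abs_integral_spow_joint_le hα1 hα2 hf hg u v fun s => le_add_of_nonneg_right (abs_nonneg _)
  have left_le := abs_integral_spow_left_le hα1 hα2 hf hg u v
  unfold D1 charFunSum
  refine (abs_add_le _ _).trans ?_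
  simp only [abs_mul, abs_neg, abs_exp, abs_of_nonneg (zero_le_one.trans hα1), mul_add]
  gcongr

lemma D2_eq_without_ite (α : ℝ) (μ : Measure S) (f g : S → ℝ) (u v : ℝ) :
    D2 α μ f g u v =
      -(α * (α - 1)) * (∫ s, |u * f s + v * g s| ^ (α - 2) * (f s * g s) ∂μ) *
          exp (-(nrm α μ (fun s => u * f s + v * g s) ^ α)) +
        α ^ 2 * (∫ s, spow (u * f s + v * g s) (α - 1) * f s ∂μ) *
          (∫ s, spow (u * f s + v * g s) (α - 1) * g s ∂μ) *
          exp (-(nrm α μ (fun s => u * f s + v * g s) ^ α)) -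
        α ^ 2 * (∫ s, spow (u * f s) (α - 1) * f s ∂μ) *
          (∫ s, spow (v * g s) (α - 1) * g s ∂μ) *
          exp (-(nrm α μ (fun s => u * f s) ^ α) - nrm α μ (fun s => v * g s) ^ α) := by
  have ite_eq : ∀ s, (if f s = 0 ∨ g s = 0 then (0 : ℝ) else
      |u * f s + v * g s| ^ (α - 2) * (f s * g s)) =
        |u * f s + v * g s| ^ (α - 2) * (f s * g s) := by
    intro s
    split_ifs with h
    · rw [mul_eq_zero.2 h, mul_zero]
    · rfl
  simp only [D2, ite_eq]

lemma abs_D2_le (hα1 : 1 ≤ α) (hα2 : α ≤ 2) (hf : MemLalpha α μ f) (hg : MemLalpha α μ g)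
    (u v : ℝ) :
    |D2 α μ f g u v| ≤
      (α * (α - 1) * |∫ s, |u * f s + v * g s| ^ (α - 2) * (f s * g s) ∂μ| +
        α ^ 2 * ((1 + |u|) * (1 + |v|) * envelopeBound α (nrm α μ f) (nrm α μ g)) ^ 2) *
        charFunSum α μ f g u v := by
  set B := (1 + |u|) * (1 + |v|) * envelopeBound α (nrm α μ f) (nrm α μ g)
  have joint_f_le : |∫ s, spow (u * f s + v * g s) (α - 1) * f s ∂μ| ≤ B :=
    abs_integral_spow_joint_le hα1 hα2 hf hg u v fun s => le_add_of_nonneg_right (abs_nonneg _)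
  have joint_g_le : |∫ s, spow (u * f s + v * g s) (α - 1) * g s ∂μ| ≤ B :=
    abs_integral_spow_joint_le hα1 hα2 hf hg u v fun s => le_add_of_nonneg_left (abs_nonneg _)
  have left_le := abs_integral_spow_left_le hα1 hα2 hf hg u v
  have right_le := abs_integral_spow_right_le hα1 hα2 hf hg u v
  have hB : 0 ≤ B := (abs_nonneg _).trans joint_f_le
  have hα0 : 0 ≤ α := zero_le_one.trans hα1
  have hα1' : 0 ≤ α - 1 := sub_nonneg.2 hα1
  set I := ∫ s, |u * f s + v * g s| ^ (α - 2) * (f s * g s) ∂μ with hI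
  set E₁ := exp (-(nrm α μ (fun s => u * f s + v * g s) ^ α)) with hE₁
  set E₂ := exp (-(nrm α μ (fun s => u * f s) ^ α) - nrm α μ (fun s => v * g s) ^ α) with hE₂
  have hE₂0 : 0 ≤ E₂ := (exp_pos _).le
  calc |D2 α μ f g u v|
      ≤ α * (α - 1) * |I| * E₁ + α ^ 2 * B * B * E₁ + α ^ 2 * B * B * E₂ := by
        rw [D2_eq_without_ite, ← hI, ← hE₁, ← hE₂]
        refine (abs_sub _ _).trans ((add_le_add_left (abs_add_le _ _) _).trans ?_)
        simp only [abs_mul, abs_neg, abs_exp, abs_pow, abs_of_nonneg hα0, abs_of_nonneg hα1',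
          hE₁, hE₂]
        gcongr
    _ ≤ α * (α - 1) * |I| * (E₁ + E₂) + α ^ 2 * B * B * E₁ + α ^ 2 * B * B * E₂ := by
        gcongr
        exact le_add_of_nonneg_right hE₂0
    _ = (α * (α - 1) * |I| + α ^ 2 * B ^ 2) * (E₁ + E₂) := by ring

end CharFun

section Integration

open scoped NNReal

variable {S : Type*} [MeasurableSpace S] {μ : Measure S} {f g : S → ℝ} {α β ε₂ nf ng q u v : ℝ}

lemma abs_D1_mul_originWeight_le (hα1 : 1 ≤ α) (hα2 : α ≤ 2) (hε₂ : 0 ≤ ε₂)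
    (hf : MemLalpha α μ f) (hg : MemLalpha α μ g) (hA2 : A2 α ε₂ μ f g)
    (hβq : β ≤ q) (hq : q ≤ 1) (hu : u ≠ 0) :
    |D1 α μ f g u v| * originWeight β u ≤
      stableWeight α (decayRate α ε₂ (nrm α μ f) (nrm α μ g)) u *
        (stableWeight α (decayRate α ε₂ (nrm α μ f) (nrm α μ g)) v *
          (2 * α * envelopeBound α (nrm α μ f) (nrm α μ g) * |u| ^ (-q))) := by
  set c := decayRate α ε₂ (nrm α μ f) (nrm α μ g)
  set K := envelopeBound α (nrm α μ f) (nrm α μ g)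
  have hK : 0 ≤ K := envelopeBound_nonneg (nrm_nonneg f) (nrm_nonneg g)
  have hα0 : 0 < α := zero_lt_one.trans_le hα1
  calc |D1 α μ f g u v| * originWeight β u
      ≤ α * ((1 + |u|) * (1 + |v|) * K) *
          (2 * (exp (-(c * |u| ^ α)) * exp (-(c * |v| ^ α)))) * (|u| ^ (-q) * (1 + |u|)) := by
        have := originWeight_nonneg β u
        gcongr
        · exact (abs_D1_le hα1 hα2 hf hg u v).trans
            (by gcongr; exact charFunSum_le hα0.ne' hε₂ hA2 u v)
        · exact originWeight_le hβq hq hu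
    _ = 2 * α * K * |u| ^ (-q) * ((1 + |u|) ^ 2 * exp (-(c * |u| ^ α))) *
          ((1 + |v|) ^ 1 * exp (-(c * |v| ^ α))) := by ring
    _ ≤ 2 * α * K * |u| ^ (-q) * stableWeight α c u * stableWeight α c v := by
        unfold stableWeight
        gcongr <;> linarith [abs_nonneg u, abs_nonneg v]
    _ = _ := by ring

lemma abs_D2_mul_originWeight_le (hα1 : 1 ≤ α) (hα2 : α ≤ 2) (hε₂ : 0 ≤ ε₂)
    (hf : MemLalpha α μ f) (hg : MemLalpha α μ g) (hA2 : A2 α ε₂ μ f g)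
    (hβq : β ≤ q) (hq : q ≤ 1) (hu : u ≠ 0) (hv : v ≠ 0) :
    |D2 α μ f g u v| * originWeight β u * originWeight β v ≤
      stableWeight α (decayRate α ε₂ (nrm α μ f) (nrm α μ g)) u *
        (stableWeight α (decayRate α ε₂ (nrm α μ f) (nrm α μ g)) v *
          ((2 * α * (α - 1) * |∫ s, |u * f s + v * g s| ^ (α - 2) * (f s * g s) ∂μ| +
            2 * (α * envelopeBound α (nrm α μ f) (nrm α μ g)) ^ 2) *
              (|u| ^ (-q) * |v| ^ (-q)))) := by
  set c := decayRate α ε₂ (nrm α μ f) (nrm α μ g)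
  set K := envelopeBound α (nrm α μ f) (nrm α μ g)
  set I := ∫ s, |u * f s + v * g s| ^ (α - 2) * (f s * g s) ∂μ
  have hα0 : 0 < α := zero_lt_one.trans_le hα1
  have := sub_nonneg.2 hα1
  set P := (1 + |u|) * (1 + |v|)
  have hP : 1 ≤ P := one_le_mul_of_one_le_of_one_le (le_add_of_nonneg_right (abs_nonneg u))
    (le_add_of_nonneg_right (abs_nonneg v))
  calc |D2 α μ f g u v| * originWeight β u * originWeight β v
      ≤ (α * (α - 1) * |I| + α ^ 2 * (P * K) ^ 2) *
          (2 * (exp (-(c * |u| ^ α)) * exp (-(c * |v| ^ α)))) *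
            (|u| ^ (-q) * (1 + |u|)) * (|v| ^ (-q) * (1 + |v|)) := by
        have := originWeight_nonneg β u
        have := originWeight_nonneg β v
        gcongr
        · exact (abs_D2_le hα1 hα2 hf hg u v).trans
            (by gcongr; exact charFunSum_le hα0.ne' hε₂ hA2 u v)
        · exact originWeight_le hβq hq hu
        · exact originWeight_le hβq hq hv
    _ ≤ (α * (α - 1) * |I| * P ^ 2 + α ^ 2 * (P * K) ^ 2) *
          (2 * (exp (-(c * |u| ^ α)) * exp (-(c * |v| ^ α)))) *
            (|u| ^ (-q) * (1 + |u|)) * (|v| ^ (-q) * (1 + |v|)) := by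
        gcongr (?_ + _) * _ * _ * _
        exact le_mul_of_one_le_right (by positivity) (one_le_pow₀ hP)
    _ = _ := by unfold stableWeight; ring

lemma ofReal_abs_integral_mul_le_lintegral_singularKernel (u v : ℝ) :
    ENNReal.ofReal (|∫ s, |u * f s + v * g s| ^ (α - 2) * (f s * g s) ∂μ| *
        (|u| ^ (-q) * |v| ^ (-q))) ≤
      ∫⁻ s, ENNReal.ofReal (singularKernel (2 - α) q (f s) (g s) u v) ∂μ := by
  rw [ENNReal.ofReal_mul (abs_nonneg _), ← enorm_eq_ofReal_abs]
  refine (mul_le_mul_left (enorm_integral_le_lintegral_enorm _) _).trans_eq ?_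
  rw [← lintegral_mul_const' _ _ ENNReal.ofReal_ne_top]
  refine lintegral_congr fun s => ?_
  rw [enorm_eq_ofReal_abs, ← ENNReal.ofReal_mul (abs_nonneg _), singularKernel, neg_sub, abs_mul,
    abs_of_nonneg (by positivity : 0 ≤ |u * f s + v * g s| ^ (α - 2))]

lemma ofReal_abs_D2_mul_originWeight_le (hα1 : 1 ≤ α) (hα2 : α ≤ 2) (hε₂ : 0 ≤ ε₂)
    (hf : MemLalpha α μ f) (hg : MemLalpha α μ g) (hA2 : A2 α ε₂ μ f g)
    (hβq : β ≤ q) (hq : q ≤ 1) (hu : u ≠ 0) (hv : v ≠ 0) :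
    ENNReal.ofReal (|D2 α μ f g u v| * originWeight β u * originWeight β v) ≤
      ENNReal.ofReal (stableWeight α (decayRate α ε₂ (nrm α μ f) (nrm α μ g)) u) *
        (ENNReal.ofReal (stableWeight α (decayRate α ε₂ (nrm α μ f) (nrm α μ g)) v) *
          (ENNReal.ofReal (2 * α * (α - 1)) *
              (∫⁻ s, ENNReal.ofReal (singularKernel (2 - α) q (f s) (g s) u v) ∂μ) +
            ENNReal.ofReal (2 * (α * envelopeBound α (nrm α μ f) (nrm α μ g)) ^ 2) *
              (ENNReal.ofReal (|u| ^ (-q)) * ENNReal.ofReal (|v| ^ (-q))))) := by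
  have ha : 0 ≤ 2 * α * (α - 1) := by nlinarith
  refine (ENNReal.ofReal_le_ofReal
    (abs_D2_mul_originWeight_le hα1 hα2 hε₂ hf hg hA2 hβq hq hu hv)).trans ?_
  rw [ENNReal.ofReal_mul (stableWeight_nonneg _ _ _),
    ENNReal.ofReal_mul (stableWeight_nonneg _ _ _), add_mul, mul_assoc (2 * α * (α - 1)),
    ENNReal.ofReal_add (by positivity) (by positivity), ENNReal.ofReal_mul ha,
    ENNReal.ofReal_mul (p := 2 * _ ^ 2) (by positivity),
    ← ENNReal.ofReal_mul (p := |u| ^ _) (by positivity)]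
  gcongr
  exact ofReal_abs_integral_mul_le_lintegral_singularKernel u v

lemma exists_lintegral_stableWeightMeasure_abs_rpow_neg_le {c : ℝ} (hα : 1 ≤ α) (hc : 0 < c)
    (hq0 : 0 ≤ q) (hq1 : q < 1) :
    ∃ C : ℝ≥0, ∫⁻ u, ENNReal.ofReal (|u| ^ (-q)) ∂(stableWeightMeasure α c) ≤ C := by
  have := isFiniteMeasure_stableWeightMeasure hα hc
  obtain ⟨L, hL⟩ := exists_stableWeightMeasure_le hα hc
  obtain ⟨C, hC⟩ := exists_lintegral_norm_add_rpow_neg_le hL hq0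
    (by rwa [Module.finrank_self, Nat.cast_one])
  exact ⟨C, by simpa only [add_zero, norm_eq_abs] using hC 0⟩

lemma lintegral_lintegral_le_stableWeightMeasure {c : ℝ} {Φ : ℝ → ℝ → ℝ} {Ψ : ℝ → ℝ → ℝ≥0∞}
    (h : ∀ u ≠ 0, ∀ v ≠ 0, ENNReal.ofReal (Φ u v) ≤
      ENNReal.ofReal (stableWeight α c u) * (ENNReal.ofReal (stableWeight α c v) * Ψ u v)) :
    ∫⁻ u, ∫⁻ v, ENNReal.ofReal (Φ u v) ≤
      ∫⁻ u, ∫⁻ v, Ψ u v ∂(stableWeightMeasure α c) ∂(stableWeightMeasure α c) :=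
  lintegral_lintegral_le_lintegral_lintegral_withDensity
    (measurable_stableWeight α c).ennreal_ofReal (fun _ => ENNReal.ofReal_ne_top)
    ((Measure.ae_ne volume 0).mono fun u hu =>
      (Measure.ae_ne volume 0).mono fun v hv => h u hu v hv)

lemma exists_lintegral_lintegral_D1_le (hα1 : 1 ≤ α) (hα2 : α ≤ 2) (hβ : β < 1) (hε₂ : 0 < ε₂)
    (hnf : 0 < nf) (hng : 0 < ng) :
    ∃ C : ℝ≥0, ∀ (S : Type*) [MeasurableSpace S] (μ : Measure S) (f g : S → ℝ),
      MemLalpha α μ f → MemLalpha α μ g → nrm α μ f = nf → nrm α μ g = ng → A2 α ε₂ μ f g →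
        ∫⁻ u, ∫⁻ v, ENNReal.ofReal (|D1 α μ f g u v| * originWeight β u) ≤ C := by
  obtain ⟨q, hq_lower, hq1⟩ := exists_between (max_lt hβ zero_lt_one)
  obtain ⟨hβq, hq0⟩ := max_lt_iff.1 hq_lower
  set c := decayRate α ε₂ nf ng with hc
  have hc0 : 0 < c := decayRate_pos hε₂ hnf hng
  have := isFiniteMeasure_stableWeightMeasure hα1 hc0
  set ν := stableWeightMeasure α c
  set K := envelopeBound α nf ng with hK
  obtain ⟨M, hM⟩ := exists_lintegral_stableWeightMeasure_abs_rpow_neg_le hα1 hc0 hq0.le hq1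
  have hK0 : 0 ≤ 2 * α * K := by
    have := envelopeBound_nonneg (α := α) hnf.le hng.le
    positivity
  refine ⟨(2 * α * K).toNNReal * M * (ν univ).toNNReal, fun S _ μ f g hf hg hnf' hng' hA2 => ?_⟩
  calc ∫⁻ u, ∫⁻ v, ENNReal.ofReal (|D1 α μ f g u v| * originWeight β u)
      ≤ ∫⁻ u, ∫⁻ _, ENNReal.ofReal (2 * α * K) * ENNReal.ofReal (|u| ^ (-q)) ∂ν ∂ν := by
        refine lintegral_lintegral_le_stableWeightMeasure fun u hu v _ => ?_
        rw [← ENNReal.ofReal_mul hK0, ← ENNReal.ofReal_mul (stableWeight_nonneg _ _ _),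
          ← ENNReal.ofReal_mul (stableWeight_nonneg _ _ _), hc, hK, ← hnf', ← hng']
        exact ENNReal.ofReal_le_ofReal
          (abs_D1_mul_originWeight_le hα1 hα2 hε₂.le hf hg hA2 hβq.le hq1.le hu)
    _ = ENNReal.ofReal (2 * α * K) * (∫⁻ u, ENNReal.ofReal (|u| ^ (-q)) ∂ν) * ν univ := by
        simp_rw [lintegral_const]
        rw [lintegral_mul_const' _ _ (measure_ne_top ν univ),
          lintegral_const_mul' _ _ ENNReal.ofReal_ne_top]
    _ ≤ ENNReal.ofReal (2 * α * K) * M * ν univ := by gcongr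
    _ = _ := by
        push_cast
        rw [ENNReal.coe_toNNReal (measure_ne_top ν univ), ENNReal.ofReal]

lemma lintegral_lintegral_const_mul_add_const_mul {X : Type*} [MeasurableSpace X] {ν : Measure X}
    {a b : ℝ≥0∞} (ha : a ≠ ∞) {J : X → X → ℝ≥0∞} {w : X → ℝ≥0∞} (hw : Measurable w) :
    ∫⁻ u, ∫⁻ v, a * J u v + b * (w u * w v) ∂ν ∂ν =
      a * (∫⁻ u, ∫⁻ v, J u v ∂ν ∂ν) + b * ((∫⁻ u, w u ∂ν) * ∫⁻ u, w u ∂ν) := by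
  simp_rw [lintegral_add_right _ ((hw.const_mul _).const_mul _), lintegral_const_mul' a _ ha,
    lintegral_const_mul b (hw.const_mul _), lintegral_const_mul _ hw]
  rw [lintegral_add_right _ ((hw.mul_const _).const_mul _), lintegral_const_mul' a _ ha,
    lintegral_const_mul b (hw.mul_const _), lintegral_mul_const _ hw]

lemma exists_lintegral_lintegral_D2_le (hα1 : 1 < α) (hα2 : α < 2) (hβ : β < α / 2)
    (hε₂ : 0 < ε₂) (hnf : 0 < nf) (hng : 0 < ng) :
    ∃ C : ℝ≥0, ∀ (S : Type*) [MeasurableSpace S] (μ : Measure S) [SFinite μ] (f g : S → ℝ),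
      MemLalpha α μ f → MemLalpha α μ g → nrm α μ f = nf → nrm α μ g = ng → A2 α ε₂ μ f g →
        ∫⁻ u, ∫⁻ v, ENNReal.ofReal
          (|D2 α μ f g u v| * originWeight β u * originWeight β v) ≤ C := by
  obtain ⟨q, hq_lower, hq⟩ := exists_between (max_lt hβ (show 0 < α / 2 by positivity))
  obtain ⟨hβq, hq0⟩ := max_lt_iff.1 hq_lower
  have hq1 : q < 1 := by linarith
  set c := decayRate α ε₂ nf ng with hc
  have hc0 : 0 < c := decayRate_pos hε₂ hnf hng
  have := isFiniteMeasure_stableWeightMeasure hα1.le hc0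
  set ν := stableWeightMeasure α c
  set K := envelopeBound α nf ng with hK
  obtain ⟨L, hL⟩ := exists_stableWeightMeasure_le hα1.le hc0
  obtain ⟨M, hM⟩ := exists_lintegral_stableWeightMeasure_abs_rpow_neg_le hα1.le hc0 hq0.le hq1
  obtain ⟨N, hN⟩ := exists_lintegral_lintegral_singularKernel_le hL (p := 2 - α) (q := q)
    (by linarith) (by linarith) hq0 (by linarith)
  refine ⟨(2 * α * (α - 1)).toNNReal * (N * (nf ^ α + ng ^ α).toNNReal) +
    (2 * (α * K) ^ 2).toNNReal * (M * M), fun S _ μ _ f g hf hg hnf' hng' hA2 => ?_⟩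
  have kernel_le := lintegral_lintegral_lintegral_singularKernel_le hN hf.1.aemeasurable
    hg.1.aemeasurable (by simpa only [sub_sub_cancel] using hf.2)
    (by simpa only [sub_sub_cancel] using hg.2)
  have hα0 : α ≠ 0 := by positivity
  simp only [sub_sub_cancel, ← nrm_rpow hα0, hnf', hng'] at kernel_le
  calc ∫⁻ u, ∫⁻ v, ENNReal.ofReal (|D2 α μ f g u v| * originWeight β u * originWeight β v)
      ≤ ∫⁻ u, ∫⁻ v, ENNReal.ofReal (2 * α * (α - 1)) *
            (∫⁻ s, ENNReal.ofReal (singularKernel (2 - α) q (f s) (g s) u v) ∂μ) +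
          ENNReal.ofReal (2 * (α * K) ^ 2) *
            (ENNReal.ofReal (|u| ^ (-q)) * ENNReal.ofReal (|v| ^ (-q))) ∂ν ∂ν := by
        refine lintegral_lintegral_le_stableWeightMeasure fun u hu v hv => ?_
        rw [hc, hK, ← hnf', ← hng']
        exact ofReal_abs_D2_mul_originWeight_le hα1.le hα2.le hε₂.le hf hg hA2 hβq.le hq1.le hu hv
    _ = ENNReal.ofReal (2 * α * (α - 1)) * (∫⁻ u, ∫⁻ v, ∫⁻ s,
            ENNReal.ofReal (singularKernel (2 - α) q (f s) (g s) u v) ∂μ ∂ν ∂ν) +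
          ENNReal.ofReal (2 * (α * K) ^ 2) * ((∫⁻ u, ENNReal.ofReal (|u| ^ (-q)) ∂ν) *
            ∫⁻ u, ENNReal.ofReal (|u| ^ (-q)) ∂ν) :=
        lintegral_lintegral_const_mul_add_const_mul ENNReal.ofReal_ne_top (by fun_prop)
    _ ≤ ENNReal.ofReal (2 * α * (α - 1)) * (N * ENNReal.ofReal (nf ^ α + ng ^ α)) +
          ENNReal.ofReal (2 * (α * K) ^ 2) * (M * M) := by gcongr
    _ = _ := by push_cast; rfl

end Integration

theorem stmt11_general (α β ε₂ nf ng : ℝ) (hα1 : 1 < α) (hα2 : α < 2) (hβ : β < α / 2)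
    (hε₂ : 0 < ε₂) (hnf : 0 < nf) (hng : 0 < ng) :
    ∃ C > (0 : ℝ), ∀ (S : Type*) [MeasurableSpace S] (μ : Measure S) [SFinite μ] (f g : S → ℝ),
      MemLalpha α μ f → MemLalpha α μ g → nrm α μ f = nf → nrm α μ g = ng → A2 α ε₂ μ f g →
        (∫⁻ u : ℝ, ∫⁻ v : ℝ, ENNReal.ofReal (|D1 α μ f g u v| * originWeight β u)
          ≤ ENNReal.ofReal C) ∧
        (∫⁻ u : ℝ, ∫⁻ v : ℝ, ENNReal.ofReal
            (|D2 α μ f g u v| * originWeight β u * originWeight β v)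
          ≤ ENNReal.ofReal C) := by
  obtain ⟨C₁, hC₁⟩ :=
    exists_lintegral_lintegral_D1_le hα1.le hα2.le (by linarith : β < 1) hε₂ hnf hng
  obtain ⟨C₂, hC₂⟩ := exists_lintegral_lintegral_D2_le hα1 hα2 hβ hε₂ hnf hng
  refine ⟨C₁ + C₂ + 1, by positivity, fun S _ μ _ f g hf hg hnf' hng' hA2 =>
    ⟨(hC₁ S μ f g hf hg hnf' hng' hA2).trans ?_, (hC₂ S μ f g hf hg hnf' hng' hA2).trans ?_⟩⟩
  all_goals
    rw [← ENNReal.ofReal_coe_nnreal]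
    exact ENNReal.ofReal_le_ofReal (by linarith [C₁.coe_nonneg, C₂.coe_nonneg])

/-- Paper's Lemma 3.6. -/
theorem stmt11 (α β ε₁ ε₂ nf ng : ℝ) (hα1 : 1 < α) (hα2 : α < 2)
    (hβ0 : 0 < β) (hβ : β < α / 2) (hε₁ : 0 < ε₁) (hε₂ : 0 < ε₂)
    (hnf : 0 < nf) (hng : 0 < ng) :
    ∃ C > (0:ℝ), ∀ (S : Type) [MeasurableSpace S] (μ : Measure S) [SigmaFinite μ]
      (f g : S → ℝ), MemLalpha α μ f → MemLalpha α μ g →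
      nrm α μ f = nf → nrm α μ g = ng → A1 α ε₁ μ f g → A2 α ε₂ μ f g →
        (∫⁻ u : ℝ, ∫⁻ v : ℝ, ENNReal.ofReal (|D1 α μ f g u v| *
            (if |u| < 1 then |u| ^ (-β) else 1))
          ≤ ENNReal.ofReal C) ∧
        (∫⁻ u : ℝ, ∫⁻ v : ℝ, ENNReal.ofReal (|D2 α μ f g u v| *
            (if |u| < 1 then |u| ^ (-β) else 1) *
            (if |v| < 1 then |v| ^ (-β) else 1))
          ≤ ENNReal.ofReal C) := by
  obtain ⟨C, hC, h⟩ := stmt11_general α β ε₂ nf ng hα1 hα2 hβ hε₂ hnf hng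
  exact ⟨C, hC, fun S _ μ _ f g hf hg hnf' hng' _ => h S μ f g hf hg hnf' hng'⟩
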